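/- Let p be an odd prime and let L be a finite ℤ_p-Lie algebra (a Lie ring whose underlying additive group is a finite abelian p-group) of nilpotency class at most two. Then there exists a finite ℤ_p-Lie algebra L̃ of nilpotency class at most two which is powerful and p-central, such that pL is isomorphic as a Lie algebra to L̃/Ω_1(L̃). -/

import Mathlib

set_option autoImplicit false

namespace Paper

/-- The additive group of `L` with the bracket multiplied by `p`. -/
def Tw (_p : ℕ) (L : Type) : Type := L

instance (p : ℕ) (L : Type) [LieRing L] : AddCommGroup (Tw p L) :=
  inferInstanceAs (AddCommGroup L)

/-- The identity map from `Tw p L` to `L`. -/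
def Tw.out (p : ℕ) (L : Type) [LieRing L] : Tw p L ≃+ L := AddEquiv.refl L

instance (p : ℕ) (L : Type) [LieRing L] : LieRing (Tw p L) where
  bracket x y := (Tw.out p L).symm (p • ⁅Tw.out p L x, Tw.out p L y⁆)
  add_lie x y z := by
    change (Tw.out p L).symm _ = (Tw.out p L).symm _ + (Tw.out p L).symm _
    simp only [map_add, add_lie, lie_add, smul_add]
  lie_add x y z := by
    change (Tw.out p L).symm _ = (Tw.out p L).symm _ + (Tw.out p L).symm _
    simp only [map_add, add_lie, lie_add, smul_add]
  lie_self x := by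
    change (Tw.out p L).symm _ = 0
    simp
  leibniz_lie x y z := by
    change (Tw.out p L).symm (p • ⁅Tw.out p L x, Tw.out p L ((Tw.out p L).symm _)⁆)
      = (Tw.out p L).symm (p • ⁅Tw.out p L ((Tw.out p L).symm _), Tw.out p L z⁆)
        + (Tw.out p L).symm (p • ⁅Tw.out p L y, Tw.out p L ((Tw.out p L).symm _)⁆)
    simp only [AddEquiv.apply_symm_apply, ← map_add, lie_nsmul, nsmul_lie, ← smul_add]
    rw [leibniz_lie]

theorem Tw.out_lie (p : ℕ) (L : Type) [LieRing L] (x y : Tw p L) :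
    Tw.out p L ⁅x, y⁆ = p • ⁅Tw.out p L x, Tw.out p L y⁆ :=
  (Tw.out p L).apply_symm_apply _

theorem statement6 (p : ℕ) (hp : p.Prime) (hodd : Odd p)
    (L : Type) [LieRing L] [Finite L]
    -- the underlying additive group of `L` is a finite abelian `p`-group
    (hpL : IsPGroup p (Multiplicative L))
    -- `L` has nilpotency class at most two
    (hclass : ∀ x y z : L, ⁅⁅x, y⁆, z⁆ = 0) :
    ∃ (Lt : Type) (_ : LieRing Lt), Finite Lt ∧ IsPGroup p (Multiplicative Lt) ∧
      -- `L̃` has nilpotency class at most two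
      (∀ x y z : Lt, ⁅⁅x, y⁆, z⁆ = 0) ∧
      -- `L̃` is powerful: `[L̃, L̃] ⊆ pL̃`
      (∀ x y : Lt, ∃ z : Lt, ⁅x, y⁆ = p • z) ∧
      -- `L̃` is `p`-central: `Ω_1(L̃) ⊆ Z(L̃)`
      (∀ x : Lt, p • x = 0 → ∀ y : Lt, ⁅x, y⁆ = 0) ∧
      -- `pL ≅ L̃/Ω_1(L̃)` as Lie rings: there is a bracket-preserving additive
      -- surjection of `L̃` onto `pL` whose kernel is exactly `Ω_1(L̃)`
      ∃ f : Lt →+ L,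
        (∀ x y : Lt, f ⁅x, y⁆ = ⁅f x, f y⁆) ∧
        (Set.range f = {a : L | ∃ b : L, a = p • b}) ∧
        (∀ x : Lt, f x = 0 ↔ p • x = 0) := by
  let e := Tw.out p L
  have he : ∀ x y, e ⁅x, y⁆ = p • ⁅e x, e y⁆ := Tw.out_lie p L
  refine ⟨Tw p L, inferInstance, inferInstanceAs (Finite L), hpL, ?_, ?_, ?_,
    (nsmulAddMonoidHom p).comp e.toAddMonoidHom, ?_, ?_, ?_⟩
  · intro x y z
    apply e.injective
    rw [he, he, nsmul_lie, hclass]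
    simp
  · intro x y
    refine ⟨e.symm ⁅e x, e y⁆, ?_⟩
    apply e.injective
    rw [he, map_nsmul, e.apply_symm_apply]
  · intro x hx y
    apply e.injective
    rw [he, ← nsmul_lie, ← map_nsmul, hx]
    simp
  · intro x y
    change p • e ⁅x, y⁆ = ⁅p • e x, p • e y⁆
    rw [he, nsmul_lie, lie_nsmul]
  · ext a
    constructor
    · rintro ⟨x, rfl⟩
      exact ⟨e x, rfl⟩
    · rintro ⟨b, rfl⟩
      exact ⟨e.symm b, rfl⟩
  · intro x
    change p • e x = 0 ↔ _
    rw [← map_nsmul, map_eq_zero_iff e e.injective]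

end Paper
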